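/- Let d < e < f be integers with d + e + f = 0, and assume e ≥ j. Suppose val(β) = d, val(γ) > d, k > d, j + k > d + e, val(β·ε^j − α·γ) = d + e, val(ε^i·γ) > d + e, and val(ε^k·α) > d + e. Then val(a·c) ≥ d − k; and if moreover e > j, then val(a·c) = d − k. -/

import Mathlib

noncomputable section

/-- The ε-adic valuation on `L = k̄((ε))`, with `val 0 = ∞`. -/
def val {K : Type*} [Field K] (x : LaurentSeries K) : WithTop ℤ := x.orderTop

/-- The uniformizer ε of the Laurent series field. -/
def eps (K : Type*) [Field K] : LaurentSeries K := HahnSeries.single 1 1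

/-- `σ : L → L` is the Frobenius automorphism: it fixes ε and raises each Laurent-series
coefficient to the `q`-th power.  (This property determines `σ` uniquely.) -/
def IsFrobenius (K : Type*) [Field K] (q : ℕ)
    (σ : LaurentSeries K → LaurentSeries K) : Prop :=
  ∀ (x : LaurentSeries K) (n : ℤ), (σ x).coeff n = (x.coeff n) ^ q

/-!
Since `σ` preserves the valuation, the term with the smaller power of `ε` dominates in `α` and in
`γ`, so `val (α * γ) = j + k + val (a * c)`. On the other hand `α * γ` differs from `β * ε ^ j`, of
valuation `d + j`, by an element of valuation `d + e ≥ d + j`; hence `val (α * γ) ≥ d + j`, with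
equality when `e > j`.
-/

theorem withTop_coe_zsmul {G : Type*} [AddCommGroup G] [LinearOrder G] [IsOrderedAddMonoid G]
    (n : ℤ) (g : G) : ((n • g : G) : WithTop G) = n • (g : WithTop G) := by
  cases n with
  | ofNat n =>
    rw [Int.ofNat_eq_natCast, natCast_zsmul, natCast_zsmul, WithTop.coe_nsmul]
  | negSucc n =>
    rw [negSucc_zsmul, negSucc_zsmul, WithTop.LinearOrderedAddCommGroup.coe_neg, WithTop.coe_nsmul]

section AddValuation

theorem addValuation_le_of_le_sub {R Γ₀ : Type*} [Ring R] [LinearOrderedAddCommMonoidWithTop Γ₀]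
    (v : AddValuation R Γ₀) {x y : R} (h : v x ≤ v (x - y)) : v x ≤ v y := by
  simpa only [sub_sub_cancel] using v.map_le_sub le_rfl h

theorem addValuation_zpow {L Γ₀ : Type*} [DivisionRing L] [LinearOrderedAddCommGroupWithTop Γ₀]
    (v : AddValuation L Γ₀) (x : L) (n : ℤ) : v (x ^ n) = n • v x :=
  map_zpow₀ (AddValuation.toValuation v) x n

theorem addValuation_mul_sub_mul_of_lt {R Γ₀ : Type*} [Ring R]
    [LinearOrderedAddCommGroupWithTop Γ₀] (v : AddValuation R Γ₀) {s t x y : R}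
    (hst : v t < v s) (hxy : v y = v x) : v (s * y - t * x) = v (t * x) := by
  by_cases hx : v x = ⊤
  · have hs : v (s * y) = ⊤ := by rw [v.map_mul, hxy, hx, add_top]
    have ht : v (t * x) = ⊤ := by rw [v.map_mul, hx, add_top]
    rw [ht]
    exact top_le_iff.mp (v.map_le_sub hs.ge ht.ge)
  · apply v.map_sub_eq_of_lt_right
    rw [v.map_mul, v.map_mul, hxy]
    exact (add_lt_add_iff_left_of_ne_top hx).mpr hst

variable {L : Type*} [DivisionRing L] (v : AddValuation L (WithTop ℤ)) {ϖ : L}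

theorem addValuation_uniformizer_zpow (hϖ : v ϖ = 1) (n : ℤ) : v (ϖ ^ n) = n := by
  rw [addValuation_zpow, hϖ, ← WithTop.coe_one, ← withTop_coe_zsmul, zsmul_one, Int.cast_id]

theorem addValuation_twisted_sub_mul_twisted_sub (hϖ : v ϖ = 1) {σ : L → L}
    (hσ : ∀ x, v (σ x) = v x) {i j k : ℤ} (hij : j < i) (hjk : k < j) (a c : L) :
    v ((ϖ ^ i * σ a - ϖ ^ j * a) * (ϖ ^ j * σ c - ϖ ^ k * c)) =
      ((j + k : ℤ) : WithTop ℤ) + v (a * c) := by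
  have hzpow {m n : ℤ} (hmn : m < n) : v (ϖ ^ m) < v (ϖ ^ n) := by
    rw [addValuation_uniformizer_zpow v hϖ, addValuation_uniformizer_zpow v hϖ]
    exact_mod_cast hmn
  rw [v.map_mul, addValuation_mul_sub_mul_of_lt v (hzpow hij) (hσ a),
    addValuation_mul_sub_mul_of_lt v (hzpow hjk) (hσ c)]
  simp only [v.map_mul, addValuation_uniformizer_zpow v hϖ, WithTop.coe_add]
  exact add_add_add_comm _ _ _ _

theorem case_f_max_d_min_val_ac_general (hϖ : v ϖ = 1) {σ : L → L} (hσ : ∀ x, v (σ x) = v x)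
    {a c α γ x : L} {i j k d e : ℤ} (hij : j < i) (hjk : k < j) (hej : j ≤ e)
    (hα : α = ϖ ^ i * σ a - ϖ ^ j * a) (hγ : γ = ϖ ^ j * σ c - ϖ ^ k * c)
    (hx : v x = d) (hminor : v (x * ϖ ^ j - α * γ) = ((d + e : ℤ) : WithTop ℤ)) :
    ((d - k : ℤ) : WithTop ℤ) ≤ v (a * c) ∧
      (j < e → v (a * c) = ((d - k : ℤ) : WithTop ℤ)) := by
  have hαγ : v (α * γ) = ((j + k : ℤ) : WithTop ℤ) + v (a * c) := by
    rw [hα, hγ, addValuation_twisted_sub_mul_twisted_sub v hϖ hσ hij hjk]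
  have hxϖ : v (x * ϖ ^ j) = ((d + j : ℤ) : WithTop ℤ) := by
    rw [v.map_mul, hx, addValuation_uniformizer_zpow v hϖ, WithTop.coe_add]
  have hcancel : ((d + j : ℤ) : WithTop ℤ) =
      ((j + k : ℤ) : WithTop ℤ) + ((d - k : ℤ) : WithTop ℤ) := by
    norm_cast
    ring
  constructor
  · have hle : v (x * ϖ ^ j) ≤ v (α * γ) := by
      apply addValuation_le_of_le_sub
      rw [hxϖ, hminor]
      exact_mod_cast add_le_add_right hej d
    rwa [hxϖ, hαγ, hcancel, WithTop.add_le_add_iff_left WithTop.coe_ne_top] at hle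
  · intro hje
    have heq : v (α * γ) = v (x * ϖ ^ j) := by
      apply v.map_eq_of_lt_sub
      rw [v.map_sub_swap, hxϖ, hminor]
      exact_mod_cast add_lt_add_right hje d
    rw [hxϖ, hαγ, hcancel] at heq
    exact WithTop.add_left_cancel WithTop.coe_ne_top heq

end AddValuation

section LaurentSeries

variable {K : Type*} [Field K]

theorem val_eps : val (eps K) = 1 := HahnSeries.orderTop_single one_ne_zero

theorem IsFrobenius.val_apply {q : ℕ} (hq : q ≠ 0) {σ : LaurentSeries K → LaurentSeries K}
    (hσ : IsFrobenius K q σ) (x : LaurentSeries K) : val (σ x) = val x := by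
  refine eq_of_forall_le_iff fun m => ?_
  simp only [val, HahnSeries.le_orderTop_iff_forall, hσ x, pow_eq_zero_iff hq]

end LaurentSeries

/-- the case `x = ε^{(d,e,f)}s_1s_2s_1` with `d < e < f`, `e ≥ j`: under
the stated valuation conditions, `val(ac) ≥ d − k`; and if moreover `e > j`, then
`val(ac) = d − k`. -/
theorem case_f_max_d_min_val_ac (F : Type*) [Field F] [Fintype F]
    (σ : LaurentSeries (AlgebraicClosure F) → LaurentSeries (AlgebraicClosure F))
    (hσ : IsFrobenius (AlgebraicClosure F) (Fintype.card F) σ)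
    (a b c : LaurentSeries (AlgebraicClosure F))
    (i j k : ℤ) (hij : j < i) (hjk : k < j) (hijk : i + j + k = 0)
    (d e f : ℤ) (hde : d < e) (hef : e < f) (hdef : d + e + f = 0)
    (hej : j ≤ e)
    (α β γ : LaurentSeries (AlgebraicClosure F))
    (hα : α = eps (AlgebraicClosure F) ^ i * σ a - eps (AlgebraicClosure F) ^ j * a)
    (hβ : β = eps (AlgebraicClosure F) ^ i * σ b - eps (AlgebraicClosure F) ^ k * b -
      a * (eps (AlgebraicClosure F) ^ j * σ c - eps (AlgebraicClosure F) ^ k * c))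
    (hγ : γ = eps (AlgebraicClosure F) ^ j * σ c - eps (AlgebraicClosure F) ^ k * c)
    (hvβ : val β = (d : WithTop ℤ))
    (hvγ : (d : WithTop ℤ) < val γ)
    (hkd : d < k)
    (hjkde : d + e < j + k)
    (hminor : val (β * eps (AlgebraicClosure F) ^ j - α * γ) = ((d + e : ℤ) : WithTop ℤ))
    (hvγ2 : ((d + e : ℤ) : WithTop ℤ) < val (eps (AlgebraicClosure F) ^ i * γ))
    (hvα : ((d + e : ℤ) : WithTop ℤ) < val (eps (AlgebraicClosure F) ^ k * α)) :
    ((d - k : ℤ) : WithTop ℤ) ≤ val (a * c) ∧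
    (j < e → val (a * c) = ((d - k : ℤ) : WithTop ℤ)) := by
  exact case_f_max_d_min_val_ac_general (HahnSeries.addVal ℤ (AlgebraicClosure F)) val_eps
    (hσ.val_apply Fintype.card_ne_zero) hij hjk hej hα hγ hvβ hminor
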